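/- Let q be an odd prime power, F a finite field with q elements, n ≥ 2 with (n,q) ≠ (2,3), and W a submodule of Fⁿ with Module.finrank F W = m where 0 < m < n. Let H be the stabilizer of W in SL(n,F) (the subgroup {A : Submodule.map (Matrix.toLin' A) W = W}) and let H̄ be the image of H in PSLₙ(F) = SL(n,F)/center under the quotient map. Then H̄ is a maximal subgroup of PSLₙ(F) of odd index if and only if every binary digit of m is at most the corresponding binary digit of n (∀ i, Nat.testBit m i = true → Nat.testBit n i = true). -/

import Mathlib

/-- The stabilizer in `SL(n, F)` of a submodule `W` of `Fⁿ`, consisting of those special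
linear matrices `A` with `Submodule.map (Matrix.toLin' A) W = W`. -/
def slSubspaceStabilizer (F : Type*) [Field F] (n : ℕ) (W : Submodule F (Fin n → F)) :
    Subgroup (Matrix.SpecialLinearGroup (Fin n) F) where
  carrier := {A | Submodule.map (Matrix.toLin' (A : Matrix (Fin n) (Fin n) F)) W = W}
  one_mem' := by
    simp [Matrix.SpecialLinearGroup.coe_one, Matrix.toLin'_one]
  mul_mem' := by
    intro A B hA hB
    simp only [Set.mem_setOf_eq] at *
    rw [Matrix.SpecialLinearGroup.coe_mul, Matrix.toLin'_mul, Submodule.map_comp, hB, hA]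
  inv_mem' := by
    intro A hA
    simp only [Set.mem_setOf_eq] at *
    have h1 : ((A⁻¹ : Matrix.SpecialLinearGroup (Fin n) F) : Matrix (Fin n) (Fin n) F) *
        (A : Matrix (Fin n) (Fin n) F) = 1 := by
      rw [← Matrix.SpecialLinearGroup.coe_mul, inv_mul_cancel,
        Matrix.SpecialLinearGroup.coe_one]
    conv_lhs => rw [← hA]
    rw [← Submodule.map_comp, ← Matrix.toLin'_mul, h1, Matrix.toLin'_one, Submodule.map_id]

theorem odd_choose_iff (n k : ℕ) :
    Odd (n.choose k) ↔ ∀ i, k.testBit i = true → n.testBit i = true := by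
  induction n using Nat.strong_induction_on generalizing k with
  | _ n ih =>
    rcases Nat.eq_zero_or_pos n with rfl | hn
    · rcases Nat.eq_zero_or_pos k with rfl | hk
      · simp
      · rw [Nat.choose_eq_zero_of_lt hk]
        obtain ⟨i, hi⟩ := Nat.exists_testBit_of_ne_zero hk.ne'
        simpa using ⟨i, hi⟩
    · have hmod := @Choose.choose_modEq_choose_mod_mul_choose_div_nat n k 2 _
      have hodd : Odd (n.choose k) ↔
          Odd ((n % 2).choose (k % 2) * (n / 2).choose (k / 2)) := by
        rw [Nat.odd_iff, Nat.odd_iff, hmod]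
      have hbit : Odd ((n % 2).choose (k % 2)) ↔
          (k.testBit 0 = true → n.testBit 0 = true) := by
        rcases Nat.mod_two_eq_zero_or_one n with h | h <;>
          rcases Nat.mod_two_eq_zero_or_one k with h' | h' <;> simp [h, h']
      rw [hodd, Nat.odd_mul, hbit, ih _ (Nat.div_lt_self hn one_lt_two)]
      constructor
      · rintro ⟨h0, hs⟩ (_ | i)
        · exact h0
        · simpa only [Nat.testBit_succ] using hs i
      · exact fun h => ⟨h 0, fun i => by simpa only [Nat.testBit_succ] using h (i + 1)⟩

section SubspaceStabilizer

open Matrix Module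

variable {F : Type*} [Field F] {n : ℕ}

/-- The transvection `x ↦ x + f x • v`, for `f v = 0`, as a special linear matrix. -/
noncomputable def slTransvection (f : Dual F (Fin n → F))
    (v : Fin n → F) (h : f v = 0) : Matrix.SpecialLinearGroup (Fin n) F :=
  ⟨LinearMap.toMatrix' (LinearMap.transvection f v), by
    rw [LinearMap.det_toMatrix', LinearMap.transvection.det, h, add_zero]⟩

theorem toLin'_slTransvection_apply (f : Dual F (Fin n → F)) (v : Fin n → F) (h : f v = 0)
    (x : Fin n → F) :
    toLin' (slTransvection f v h : Matrix (Fin n) (Fin n) F) x = x + f x • v := by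
  simp [slTransvection, LinearMap.transvection.apply]

theorem specialLinearGroup_ext_toLin' {A B : Matrix.SpecialLinearGroup (Fin n) F}
    (h : ∀ x, toLin' (A : Matrix (Fin n) (Fin n) F) x =
      toLin' (B : Matrix (Fin n) (Fin n) F) x) : A = B :=
  Subtype.ext (toLin'.injective (LinearMap.ext h))

theorem toLin'_transvection_apply {i j : Fin n} (hij : i ≠ j) (b : F) (x : Fin n → F) :
    toLin' (Matrix.SpecialLinearGroup.transvection hij b : Matrix (Fin n) (Fin n) F) x =
      x + (b * x j) • Pi.single i 1 := by
  ext k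
  simp [Matrix.SpecialLinearGroup.transvection_coe, single_mulVec_eq, Pi.single_apply]

theorem diag2n_eq_prod_transvection {i j : Fin n} (hij : i ≠ j) {c : F} (hc : c ≠ 0) :
    Matrix.SpecialLinearGroup.diag2n hij c hc =
      Matrix.SpecialLinearGroup.transvection hij c *
      Matrix.SpecialLinearGroup.transvection hij.symm (-c⁻¹) *
      Matrix.SpecialLinearGroup.transvection hij c *
      Matrix.SpecialLinearGroup.transvection hij (-1) *
      Matrix.SpecialLinearGroup.transvection hij.symm 1 *
      Matrix.SpecialLinearGroup.transvection hij (-1) := by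
  apply specialLinearGroup_ext_toLin'
  intro x
  have hji := hij.symm
  simp only [Matrix.SpecialLinearGroup.coe_mul, toLin'_mul, LinearMap.comp_apply,
    toLin'_transvection_apply, Matrix.SpecialLinearGroup.diag2n_coe]
  ext k
  by_cases hi : k = i
  · subst hi
    simp [hij, hji, mulVec_diagonal]
    field_simp
    ring
  · by_cases hj : k = j
    · subst hj
      simp [hij, hji, mulVec_diagonal]
      field_simp
      ring
    · simp [hi, hj, mulVec_diagonal]

theorem eq_top_of_slTransvection_mem (hn : 2 ≤ n) (K : Subgroup (Matrix.SpecialLinearGroup (Fin n) F))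
    (hK : ∀ f v h, slTransvection f v h ∈ K) : K = ⊤ := by
  have : Nontrivial (Fin n) := Fin.nontrivial_iff_two_le.2 hn
  have htrans (i j : Fin n) (hij : i ≠ j) (a : F) :
      Matrix.SpecialLinearGroup.transvection hij a ∈ K := by
    have h : (a • LinearMap.proj (R := F) (φ := fun _ : Fin n => F) j) (Pi.single i 1) = 0 := by
      simp [hij]
    convert hK _ _ h
    apply specialLinearGroup_ext_toLin'
    intro x
    rw [toLin'_slTransvection_apply, toLin'_transvection_apply]
    simp
  refine (Subgroup.eq_top_iff' K).2 fun A =>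
    Matrix.SpecialLinearGroup.diagonal_transvection_induction' (· ∈ K) A
    (fun i j hij c hc => ?_) htrans (fun _ _ => mul_mem)
  rw [diag2n_eq_prod_transvection hij hc]
  exact mul_mem (mul_mem (mul_mem (mul_mem (mul_mem (htrans _ _ _ _) (htrans _ _ _ _))
    (htrans _ _ _ _)) (htrans _ _ _ _)) (htrans _ _ _ _)) (htrans _ _ _ _)

theorem exists_dual_eq_one_of_notMem {V : Type*} [AddCommGroup V] [Module F V]
    {p : Submodule F V} {x : V} (hx : x ∉ p) : ∃ f : Dual F V, f x = 1 ∧ ∀ y ∈ p, f y = 0 := by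
  obtain ⟨f, hfx, hf⟩ := Submodule.exists_dual_map_eq_bot_of_notMem hx inferInstance
  refine ⟨(f x)⁻¹ • f, by simp [hfx], fun y hy => ?_⟩
  have : f y ∈ p.map f := Submodule.mem_map_of_mem hy
  rw [hf, Submodule.mem_bot] at this
  simp [this]

theorem toLin'_injective (A : Matrix.SpecialLinearGroup (Fin n) F) :
    Function.Injective (toLin' (A : Matrix (Fin n) (Fin n) F)) :=
  (Matrix.SpecialLinearGroup.toLin' A).injective

theorem finrank_map_toLin' (A : Matrix.SpecialLinearGroup (Fin n) F)
    (W : Submodule F (Fin n → F)) :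
    finrank F (W.map (toLin' (A : Matrix (Fin n) (Fin n) F))) = finrank F W :=
  LinearEquiv.finrank_map_eq (Matrix.SpecialLinearGroup.toLin' A) W

theorem mem_slSubspaceStabilizer_iff {W : Submodule F (Fin n → F)}
    {A : Matrix.SpecialLinearGroup (Fin n) F} :
    A ∈ slSubspaceStabilizer F n W ↔
      ∀ w ∈ W, toLin' (A : Matrix (Fin n) (Fin n) F) w ∈ W := by
  change W.map (toLin' (A : Matrix (Fin n) (Fin n) F)) = W ↔ _
  refine ⟨fun h w hw => h ▸ Submodule.mem_map_of_mem hw, fun h => ?_⟩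
  refine Submodule.eq_of_le_of_finrank_eq (Submodule.map_le_iff_le_comap.2 h) ?_
  exact finrank_map_toLin' A W

theorem conj_slTransvection (A : Matrix.SpecialLinearGroup (Fin n) F) (f : Dual F (Fin n → F))
    (v : Fin n → F) (h : f (toLin' (A : Matrix (Fin n) (Fin n) F) v) = 0) :
    slTransvection f (toLin' (A : Matrix (Fin n) (Fin n) F) v) h =
      A * slTransvection (f ∘ₗ toLin' (A : Matrix (Fin n) (Fin n) F)) v h * A⁻¹ := by
  rw [eq_mul_inv_iff_mul_eq]
  apply specialLinearGroup_ext_toLin'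
  intro x
  simp only [Matrix.SpecialLinearGroup.coe_mul, toLin'_mul, LinearMap.comp_apply,
    toLin'_slTransvection_apply, map_add, map_smul]

theorem slSubspaceStabilizer_isCoatom (hn : 2 ≤ n) {W : Submodule F (Fin n → F)}
    (hbot : W ≠ ⊥) (htop : W ≠ ⊤) : IsCoatom (slSubspaceStabilizer F n W) := by
  constructor
  · intro h
    obtain ⟨w, hw, hw0⟩ := W.exists_mem_ne_zero_of_ne_bot hbot
    obtain ⟨v, -, hv⟩ := SetLike.exists_of_lt htop.lt_top
    have hwv : w ∉ Submodule.span F {v} := by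
      intro hmem
      obtain ⟨a, rfl⟩ := Submodule.mem_span_singleton.1 hmem
      exact hv ((W.smul_mem_iff fun ha => hw0 (by simp [ha])).1 hw)
    obtain ⟨f, hfw, hf⟩ := exists_dual_eq_one_of_notMem hwv
    have hfv := hf v (Submodule.mem_span_singleton_self v)
    have hmem := mem_slSubspaceStabilizer_iff.1
      (h ▸ Subgroup.mem_top (slTransvection f v hfv)) w hw
    rw [toLin'_slTransvection_apply, hfw, one_smul] at hmem
    exact hv ((W.add_mem_iff_right hw).1 hmem)
  · intro K hK
    obtain ⟨hle, g, hgK, hgW⟩ := SetLike.lt_iff_le_and_exists.1 hK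
    rw [mem_slSubspaceStabilizer_iff] at hgW
    push Not at hgW
    obtain ⟨w, hw, hgw⟩ := hgW
    set T : Set (Fin n → F) := {v | ∀ f h, slTransvection f v h ∈ K}
    have hWT (v) (hv : v ∈ W) : v ∈ T := fun f h => hle <|
      mem_slSubspaceStabilizer_iff.2 fun x hx => by
        rw [toLin'_slTransvection_apply]
        exact W.add_mem hx (W.smul_mem _ hv)
    have hKT (A) (hA : A ∈ K) (v) (hv : v ∈ T) :
        toLin' (A : Matrix (Fin n) (Fin n) F) v ∈ T := fun f h => by
      rw [conj_slTransvection]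
      exact mul_mem (mul_mem hA (hv _ _)) (inv_mem hA)
    have hsmulT (a : F) (ha : a ≠ 0) (v) (hv : v ∈ T) : a • v ∈ T := fun f h => by
      have h' : (a • f) v = 0 := by simpa using h
      convert hv (a • f) h' using 1
      apply specialLinearGroup_ext_toLin'
      intro x
      rw [toLin'_slTransvection_apply, toLin'_slTransvection_apply, LinearMap.smul_apply,
        smul_eq_mul, smul_smul, mul_comm]
    have hvT := hKT g hgK w (hWT w hw)
    set v := toLin' (g : Matrix (Fin n) (Fin n) F) w
    refine eq_top_of_slTransvection_mem hn K fun f x h => ?_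
    suffices x ∈ T from this f h
    by_cases hx : x ∈ W ⊔ Submodule.span F {v}
    · obtain ⟨y, hy, z, hz, rfl⟩ := Submodule.mem_sup.1 hx
      obtain ⟨a, rfl⟩ := Submodule.mem_span_singleton.1 hz
      rcases eq_or_ne a 0 with rfl | ha
      · simpa using hWT y hy
      · obtain ⟨f, hfv, hf⟩ := exists_dual_eq_one_of_notMem hgw
        have hmem := hWT _ (W.smul_mem a⁻¹ hy) f (hf _ (W.smul_mem a⁻¹ hy))
        have := hsmulT a ha _ (hKT _ hmem v hvT)
        rwa [toLin'_slTransvection_apply, hfv, one_smul, smul_add, smul_inv_smul₀ ha,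
          add_comm] at this
    · have hv : v ∉ W ⊔ Submodule.span F {x - v} := by
        intro hmem
        obtain ⟨y, hy, z, hz, hyz⟩ := Submodule.mem_sup.1 hmem
        obtain ⟨a, rfl⟩ := Submodule.mem_span_singleton.1 hz
        rcases eq_or_ne a 0 with rfl | ha
        · rw [zero_smul, add_zero] at hyz
          exact hgw (hyz ▸ hy)
        · apply hx
          have hxy : x = -(a⁻¹ • y) + (a⁻¹ + 1) • v := by
            have : a • x = -y + (1 + a) • v := by
              rw [eq_sub_of_add_eq hyz]
              module
            rw [← inv_smul_smul₀ ha x, this, smul_add, smul_smul, mul_add, mul_one,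
              inv_mul_cancel₀ ha, smul_neg]
          rw [hxy]
          exact Submodule.add_mem_sup (W.neg_mem (W.smul_mem _ hy))
            (Submodule.smul_mem _ _ (Submodule.mem_span_singleton_self v))
      obtain ⟨f, hfv, hf⟩ := exists_dual_eq_one_of_notMem hv
      have hfx : f (x - v) = 0 :=
        hf _ (Submodule.mem_sup_right (Submodule.mem_span_singleton_self _))
      have hmem : slTransvection f (x - v) hfx ∈ K := hle <|
        mem_slSubspaceStabilizer_iff.2 fun y hy => by
          rw [toLin'_slTransvection_apply, hf y (Submodule.mem_sup_left hy)]
          simpa using hy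
      have := hKT _ hmem v hvT
      rwa [toLin'_slTransvection_apply, hfv, one_smul, add_sub_cancel] at this

theorem center_le_slSubspaceStabilizer (W : Submodule F (Fin n → F)) :
    Subgroup.center (Matrix.SpecialLinearGroup (Fin n) F) ≤ slSubspaceStabilizer F n W := by
  intro A hA
  obtain ⟨r, -, hr⟩ := Matrix.SpecialLinearGroup.mem_center_iff.1 hA
  refine mem_slSubspaceStabilizer_iff.2 fun w hw => ?_
  rw [← hr]
  have : toLin' (scalar (Fin n) r) w = r • w := by
    ext k
    simp [mulVec_diagonal]
  rw [this]
  exact W.smul_mem r hw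

theorem isCoatom_map_of_surjective {G G' : Type*} [Group G] [Group G'] {φ : G →* G'}
    (hφ : Function.Surjective φ) {H : Subgroup G} (hker : φ.ker ≤ H) (hH : IsCoatom H) :
    IsCoatom (H.map φ) := by
  have hcomap : (H.map φ).comap φ = H := Subgroup.comap_map_eq_self hker
  constructor
  · intro h
    rw [h, Subgroup.comap_top] at hcomap
    exact hH.1 hcomap.symm
  · intro K hK
    have : H < K.comap φ := by
      rw [← hcomap]
      exact (Subgroup.comap_lt_comap_of_surjective hφ).2 hK
    rw [← Subgroup.map_comap_eq_self_of_surjective hφ K, hH.2 _ this,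
      Subgroup.map_top_of_surjective φ hφ]

theorem exists_specialLinearGroup_map_eq {W U : Submodule F (Fin n → F)} (hW : W ≠ ⊥)
    (hWU : finrank F W = finrank F U) : ∃ A : Matrix.SpecialLinearGroup (Fin n) F,
      W.map (toLin' (A : Matrix (Fin n) (Fin n) F)) = U := by
  obtain ⟨W', hW'⟩ := W.exists_isCompl
  obtain ⟨U', hU'⟩ := U.exists_isCompl
  have hcompl : finrank F W' = finrank F U' := by
    have h₁ := Submodule.finrank_add_eq_of_isCompl hW'
    have h₂ := Submodule.finrank_add_eq_of_isCompl hU'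
    omega
  let e : (Fin n → F) ≃ₗ[F] (Fin n → F) :=
    (Submodule.prodEquivOfIsCompl W W' hW').symm ≪≫ₗ
      ((LinearEquiv.ofFinrankEq W U hWU).prodCongr (LinearEquiv.ofFinrankEq W' U' hcompl)) ≪≫ₗ
      Submodule.prodEquivOfIsCompl U U' hU'
  have he (w) (hw : w ∈ W) : e w ∈ U := by
    have : (Submodule.prodEquivOfIsCompl W W' hW').symm w = (⟨w, hw⟩, 0) :=
      Submodule.prodEquivOfIsCompl_symm_apply_left W W' hW' ⟨w, hw⟩
    simp [e, this]
  have hdet : LinearMap.det (e : (Fin n → F) →ₗ[F] (Fin n → F)) ≠ 0 := e.isUnit_det'.ne_zero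
  obtain ⟨w, hw, hw0⟩ := W.exists_mem_ne_zero_of_ne_bot hW
  obtain ⟨f, hf, -⟩ := exists_dual_eq_one_of_notMem (F := F) (p := ⊥) (x := w) (by simpa using hw0)
  set d := (LinearMap.det (e : (Fin n → F) →ₗ[F] (Fin n → F)))⁻¹ with hd
  let A : Matrix.SpecialLinearGroup (Fin n) F :=
    ⟨LinearMap.toMatrix' (e.toLinearMap ∘ₗ LinearMap.transvection ((d - 1) • f) w), by
      rw [LinearMap.det_toMatrix', LinearMap.det_comp, LinearMap.transvection.det]
      simp [hf, hd, hdet]⟩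
  refine ⟨A, Submodule.eq_of_le_of_finrank_eq (Submodule.map_le_iff_le_comap.2 fun x hx => ?_) ?_⟩
  · simp only [Submodule.mem_comap, A, toLin'_toMatrix', LinearMap.comp_apply,
      LinearMap.transvection.apply]
    exact he _ (W.add_mem hx (W.smul_mem _ hw))
  · rw [finrank_map_toLin' A W, hWU]

theorem index_slSubspaceStabilizer {W : Submodule F (Fin n → F)} (hW : W ≠ ⊥) :
    (slSubspaceStabilizer F n W).index =
      Nat.card {U : Submodule F (Fin n → F) // finrank F U = finrank F W} := by
  have hrel (A B : Matrix.SpecialLinearGroup (Fin n) F) : A⁻¹ * B ∈ slSubspaceStabilizer F n W ↔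
      W.map (toLin' (A : Matrix (Fin n) (Fin n) F)) =
        W.map (toLin' (B : Matrix (Fin n) (Fin n) F)) := by
    have hB : W.map (toLin' (B : Matrix (Fin n) (Fin n) F)) =
        (W.map (toLin' ((A⁻¹ * B : Matrix.SpecialLinearGroup (Fin n) F) :
          Matrix (Fin n) (Fin n) F))).map (toLin' (A : Matrix (Fin n) (Fin n) F)) := by
      rw [← Submodule.map_comp, ← toLin'_mul, ← Matrix.SpecialLinearGroup.coe_mul, mul_inv_cancel_left]
    rw [hB, (Submodule.map_injective_of_injective (toLin'_injective A)).eq_iff]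
    exact eq_comm
  let φ : Matrix.SpecialLinearGroup (Fin n) F ⧸ slSubspaceStabilizer F n W →
      {U : Submodule F (Fin n → F) // finrank F U = finrank F W} :=
    Quotient.lift (fun A => ⟨W.map (toLin' (A : Matrix (Fin n) (Fin n) F)),
        finrank_map_toLin' A W⟩)
      fun A B h => Subtype.ext ((hrel A B).1 (QuotientGroup.leftRel_apply.1 h))
  refine Nat.card_eq_of_bijective φ ⟨?_, fun U => ?_⟩
  · rintro ⟨A⟩ ⟨B⟩ h
    exact QuotientGroup.eq.2 ((hrel A B).2 (congrArg Subtype.val h))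
  · obtain ⟨A, hA⟩ := exists_specialLinearGroup_map_eq hW U.2.symm
    exact ⟨QuotientGroup.mk A, Subtype.ext hA⟩
/-- The sign vector `ε` acts on `Fⁿ` by multiplying the `i`-th coordinate by `ε i`. -/
def signLinearEquiv (F : Type*) [Field F] (n : ℕ) :
    (Fin n → ℤˣ) →* ((Fin n → F) ≃ₗ[F] (Fin n → F)) where
  toFun ε := LinearEquiv.piCongrRight fun i =>
    LinearEquiv.smulOfUnit (Units.map (Int.castRingHom F).toMonoidHom (ε i))
  map_one' := by
    ext x i
    exact (congrArg (· * x i) Int.cast_one).trans (one_mul _)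
  map_mul' ε δ := by
    ext x i
    exact (congrArg (· * x i) (Int.cast_mul _ _)).trans (mul_assoc _ _ _)

/-- The sign vectors act on the `m`-dimensional subspaces of `Fⁿ` by taking images. -/
abbrev signMulAction (F : Type*) [Field F] (n m : ℕ) :
    MulAction (Fin n → ℤˣ) {U : Submodule F (Fin n → F) // finrank F U = m} where
  smul ε U := ⟨U.1.map (signLinearEquiv F n ε : (Fin n → F) →ₗ[F] (Fin n → F)),
    (LinearEquiv.finrank_map_eq _ _).trans U.2⟩
  one_smul U := Subtype.ext <| by
    change U.1.map (signLinearEquiv F n 1 : (Fin n → F) →ₗ[F] (Fin n → F)) = U.1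
    rw [map_one]
    exact Submodule.map_id _
  mul_smul ε δ U := Subtype.ext <| by
    change U.1.map (signLinearEquiv F n (ε * δ) : (Fin n → F) →ₗ[F] (Fin n → F)) =
      (U.1.map (signLinearEquiv F n δ : (Fin n → F) →ₗ[F] (Fin n → F))).map
        (signLinearEquiv F n ε : (Fin n → F) →ₗ[F] (Fin n → F))
    rw [map_mul, ← Submodule.map_comp]
    rfl

attribute [local instance] signMulAction

theorem mem_fixedPoints_sign_iff {m : ℕ}
    {U : {U : Submodule F (Fin n → F) // finrank F U = m}} :
    U ∈ MulAction.fixedPoints (Fin n → ℤˣ) {U : Submodule F (Fin n → F) // finrank F U = m} ↔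
      ∀ ε : Fin n → ℤˣ, ∀ x ∈ U.1, (fun i => ((ε i : ℤ) : F) * x i) ∈ U.1 := by
  rw [MulAction.mem_fixedPoints]
  refine forall_congr' fun ε => ⟨fun h x hx => ?_, fun h => Subtype.ext ?_⟩
  · have : (fun i => ((ε i : ℤ) : F) * x i) ∈ (ε • U).1 := ⟨x, hx, rfl⟩
    rwa [h] at this
  · refine Submodule.eq_of_le_of_finrank_eq ?_ ((ε • U).2.trans U.2.symm)
    rintro _ ⟨x, hx, rfl⟩
    exact h x hx

theorem single_mem_of_mem_fixedPoints_sign (h2 : (2 : F) ≠ 0) {m : ℕ}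
    {U : {U : Submodule F (Fin n → F) // finrank F U = m}}
    (hU : U ∈ MulAction.fixedPoints (Fin n → ℤˣ)
      {U : Submodule F (Fin n → F) // finrank F U = m})
    {x : Fin n → F} (hx : x ∈ U.1) {i : Fin n} (hi : x i ≠ 0) :
    (Pi.single i 1 : Fin n → F) ∈ U.1 := by
  have hflip := mem_fixedPoints_sign_iff.1 hU (Function.update 1 i (-1)) x hx
  have hsub := U.1.smul_mem (2 * x i)⁻¹ (U.1.sub_mem hx hflip)
  convert hsub using 1
  ext k
  rcases eq_or_ne k i with rfl | hk
  · have : (2 * x k) ≠ 0 := mul_ne_zero h2 hi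
    simp only [Pi.single_eq_same, Pi.smul_apply, Pi.sub_apply, Function.update_self, smul_eq_mul]
    push_cast
    field_simp
    ring
  · simp [hk]

theorem card_fixedPoints_sign (h2 : (2 : F) ≠ 0) (m : ℕ) :
    Nat.card (MulAction.fixedPoints (Fin n → ℤˣ)
      {U : Submodule F (Fin n → F) // finrank F U = m}) = n.choose m := by
  classical
  have hfinrank (s : Finset (Fin n)) :
      finrank F (Submodule.span F (Pi.basisFun F (Fin n) '' s)) = s.card := by
    rw [← Finset.coe_image, finrank_span_finset_eq_card,
      Finset.card_image_of_injective _ (Pi.basisFun F (Fin n)).injective]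
    rw [Finset.coe_image]
    exact (Pi.basisFun F (Fin n)).linearIndependent.linearIndepOn_id.mono
      (Set.image_subset_range _ _)
  have hmem (s : Finset (Fin n)) (x : Fin n → F) :
      x ∈ Submodule.span F (Pi.basisFun F (Fin n) '' s) ↔ ∀ i, x i ≠ 0 → i ∈ s := by
    rw [Basis.mem_span_image]
    simp [Set.subset_def]
  let φ : {s : Finset (Fin n) // s.card = m} → MulAction.fixedPoints (Fin n → ℤˣ)
      {U : Submodule F (Fin n → F) // finrank F U = m} := fun s =>
    ⟨⟨Submodule.span F (Pi.basisFun F (Fin n) '' s), (hfinrank s).trans s.2⟩,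
      mem_fixedPoints_sign_iff.2 fun ε x hx => by
        rw [hmem] at hx ⊢
        exact fun i hi => hx i (right_ne_zero_of_mul hi)⟩
  have hφ : Function.Bijective φ := by
    constructor
    · intro s t hst
      have hst' : Submodule.span F (Pi.basisFun F (Fin n) '' (s.1 : Set (Fin n))) =
          Submodule.span F (Pi.basisFun F (Fin n) '' (t.1 : Set (Fin n))) :=
        congrArg (fun U => U.1.1) hst
      ext i
      have := SetLike.ext_iff.1 hst' (Pi.single i 1)
      rw [hmem, hmem] at this
      simpa [Pi.single_apply] using this
    · intro U
      let s : Finset (Fin n) := {i | (Pi.single i 1 : Fin n → F) ∈ U.1.1}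
      have hs : Submodule.span F (Pi.basisFun F (Fin n) '' (s : Set (Fin n))) = U.1.1 := by
        apply le_antisymm
        · rw [Submodule.span_le]
          rintro _ ⟨i, hi, rfl⟩
          simpa [s] using hi
        · intro x hx
          rw [hmem]
          intro i hi
          simpa [s] using single_mem_of_mem_fixedPoints_sign h2 U.2 hx hi
      exact ⟨⟨s, by rw [← hfinrank, hs, U.1.2]⟩, Subtype.ext (Subtype.ext hs)⟩
  rw [← Nat.card_eq_of_bijective φ hφ, Nat.card_eq_fintype_card,
    Fintype.card_finset_len, Fintype.card_fin]

theorem card_subspaces_modEq_choose [Finite F] (h2 : (2 : F) ≠ 0) (m : ℕ) :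
    Nat.card {U : Submodule F (Fin n → F) // finrank F U = m} ≡ n.choose m [MOD 2] := by
  have hG : IsPGroup 2 (Fin n → ℤˣ) := IsPGroup.of_card (n := n) (by simp)
  rw [← card_fixedPoints_sign h2]
  exact hG.card_modEq_card_fixedPoints _

end SubspaceStabilizer

/-- for `q` an odd prime power, `|F| = q`, `n ≥ 2`, `(n, q) ≠ (2, 3)`, and `W`
an `m`-dimensional subspace of `Fⁿ` with `0 < m < n`, the image in `PSLₙ(F)` of the
stabilizer of `W` in `SL(n, F)` is a maximal subgroup of odd index iff every binary digit
of `m` is at most the corresponding binary digit of `n`. -/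
theorem psl_subspace_stabilizer_maximal_odd_index_iff (q : ℕ) (hq_odd : Odd q)
    (hq_pp : IsPrimePow q) (F : Type) [Field F] [Fintype F] (hF : Fintype.card F = q)
    (n : ℕ) (hn : 2 ≤ n) (hnq : ¬(n = 2 ∧ q = 3))
    (W : Submodule F (Fin n → F)) (m : ℕ) (hm : Module.finrank F W = m)
    (hm0 : 0 < m) (hmn : m < n) :
    (IsCoatom (Subgroup.map
        (QuotientGroup.mk' (Subgroup.center (Matrix.SpecialLinearGroup (Fin n) F)))
        (slSubspaceStabilizer F n W)) ∧
      Odd (Subgroup.map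
        (QuotientGroup.mk' (Subgroup.center (Matrix.SpecialLinearGroup (Fin n) F)))
        (slSubspaceStabilizer F n W)).index) ↔
      ∀ i, Nat.testBit m i = true → Nat.testBit n i = true := by
  have hF2 : (2 : F) ≠ 0 := Ring.two_ne_zero fun hchar => by
    have := FiniteField.even_card_iff_char_two.1 hchar
    rw [hF] at this
    exact Nat.not_even_iff_odd.2 hq_odd (Nat.even_iff.2 this)
  have hbot : W ≠ ⊥ := by
    rintro rfl
    rw [finrank_bot] at hm
    omega
  have htop : W ≠ ⊤ := by
    rintro rfl
    rw [finrank_top, Module.finrank_fin_fun] at hm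
    omega
  have hsurj := QuotientGroup.mk'_surjective
    (Subgroup.center (Matrix.SpecialLinearGroup (Fin n) F))
  have hker : (QuotientGroup.mk'
      (Subgroup.center (Matrix.SpecialLinearGroup (Fin n) F))).ker ≤
      slSubspaceStabilizer F n W := by
    rw [QuotientGroup.ker_mk']
    exact center_le_slSubspaceStabilizer W
  rw [and_iff_right (isCoatom_map_of_surjective hsurj hker
      (slSubspaceStabilizer_isCoatom hn hbot htop)),
    Subgroup.index_map_eq _ hsurj hker, index_slSubspaceStabilizer hbot, hm, Nat.odd_iff,
    card_subspaces_modEq_choose hF2, ← Nat.odd_iff, odd_choose_iff]
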